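/- arXiv:2008.00753 — 2 statements merged into one kernel-verified Lean document; each statement's English description precedes it below -/
import Mathlib

section
/- Let G be a finite connected simple graph with vertex set V of size γ ≥ 2 and δ edges, g : V → ℕ, w : V → ℚ with 0 < w(v) < 1 and ∑ w(v) = 1; set p_a = (∑ g(v)) + δ − γ + 1, λ(v) = 1 − g(v) − w(v)·(1 − p_a), and Δ_w(O_B) = (∑_{v∈B} λ(v)) − N(B) for B ⊆ V. Fix a vertex t and a system of minimal paths p to t, and let A_e = { v : e is an edge of p(v) }. If for every edge e with A_e ≠ ∅ one has (δ_{A_e} − 1)/2 < Δ_w(O_{A_e}) < (δ_{A_e} + 1)/2, then w is numerically good: every depth-one datum (r,s,a,b) on G has defect Δ = (∑_{v∈V} r(v)·λ(v)) − ∑_e s(e) ≥ 0, with Δ = 0 if and only if a(e) = b(e) = 0 for every edge e. -/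
open Finset

/-- A depth-one datum on a graph `G` (encoding a depth one sheaf on a nodal curve with
dual graph `G`): ranks `r` on vertices (components), and at each edge (node) `e` the
free rank `s e` of the stalk and torsion parts `a v e` attached to each endpoint `v`
of `e`, subject to the compatibility `r v = s e + a v e` for `v` an endpoint of `e`.
For an edge `e` with chosen endpoints `u_e, v_e`, the paper's `a(e)`, `b(e)` are
`a u_e e` and `a v_e e`. -/
structure DepthOneDatum {V : Type*} (G : SimpleGraph V) where
  r : V → ℕ
  s : Sym2 V → ℕ
  a : V → Sym2 V → ℕ
  compat : ∀ e ∈ G.edgeSet, ∀ v ∈ e, r v = s e + a v e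

variable {V : Type*} [Fintype V] [DecidableEq V]

/-- The defect `Δ = (∑ v, r v · λ v) − ∑ e, s e` of a depth-one datum
(equal to `Δ_w(E) = wdeg E − ∑ deg E_i` for the corresponding sheaf). -/
def DepthOneDatum.defect {G : SimpleGraph V} [DecidableRel G.Adj]
    (lam : V → ℚ) (D : DepthOneDatum G) : ℚ :=
  (∑ v : V, (D.r v : ℚ) * lam v) - ∑ e ∈ G.edgeFinset, (D.s e : ℚ)

/-- The residual rank `t_e = a(e) + b(e)` of a depth-one datum at an edge `e`. -/
def DepthOneDatum.tRes {G : SimpleGraph V} (D : DepthOneDatum G) (e : Sym2 V) : ℚ :=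
  Sym2.lift ⟨fun x y => (D.a x e : ℚ) + (D.a y e : ℚ), fun _ _ => add_comm _ _⟩ e

/-- A depth-one datum is locally free when all torsion parts `a`, `b` vanish at all edges. -/
def DepthOneDatum.LocFree {G : SimpleGraph V} (D : DepthOneDatum G) : Prop :=
  ∀ e ∈ G.edgeSet, ∀ v ∈ e, D.a v e = 0

/-- `N(B)`: the number of edges of `G` with both endpoints in `B`. -/
def insideCount (G : SimpleGraph V) [DecidableRel G.Adj] (B : Finset V) : ℕ :=
  (G.edgeFinset.filter (fun e => e ∈ B.sym2)).card

/-- `δ_B`: the number of edges of `G` with exactly one endpoint in `B`. -/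
def crossCount (G : SimpleGraph V) [DecidableRel G.Adj] (B : Finset V) : ℕ :=
  (G.edgeFinset.filter (fun e => e ∉ B.sym2 ∧ e ∉ Bᶜ.sym2)).card

/-- `Δ_w(O_B) = (∑_{v ∈ B} λ v) − N(B)`. -/
def DeltaO (G : SimpleGraph V) [DecidableRel G.Adj] (lam : V → ℚ) (B : Finset V) : ℚ :=
  (∑ v ∈ B, lam v) - (insideCount G B : ℚ)

/-!
Subtracting half the degree from `λ` turns `Δ_w(O_B)` into
`m(B) = ∑_{v ∈ B} (λ v - deg v / 2) = Δ_w(O_B) - δ_B / 2`, so `(⋆⋆)` reads `|m(A_e)| < 1/2`, and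
`m(V) = 0`. Hence `∑ r v · m v = ∑ (r v - r t) · m v`, and telescoping `r v - r t` along `p v` gives
`Δ = ∑_e (f e · m(A_e) + t_e / 2)`, where `f e` is the drop of `r` along `e` and `t_e = a e + b e`.
Since `|f e| ≤ t_e`, each summand is nonnegative and vanishes exactly when `t_e = 0`.

The telescoping works for trails that never use an edge in opposite directions. Minimal paths to `t`
have this property because each of their steps decreases the distance to `t`.
-/

section Walks

variable {U R : Type*} {G : SimpleGraph U} {t : U}

lemma dist_lt_dist_of_mem_darts {u : U} {p : G.Walk u t} (hp : p.length = G.dist u t)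
    {d : G.Dart} (hd : d ∈ p.darts) : G.dist d.snd t < G.dist d.fst t := by
  induction p with
  | nil => simp at hd
  | cons h q ih =>
    have hq : q.length = G.dist _ _ :=
      SimpleGraph.length_eq_dist_of_subwalk hp (q.isSubwalk_cons h)
    rw [SimpleGraph.Walk.length_cons] at hp
    rcases List.mem_cons.1 hd with rfl | hd
    · dsimp only
      lia
    · exact ih hq hd

lemma symm_notMem_darts_of_length_eq_dist {u v : U} {p : G.Walk u t} {q : G.Walk v t}
    (hp : p.length = G.dist u t) (hq : q.length = G.dist v t) {d : G.Dart} (hd : d ∈ p.darts) :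
    d.symm ∉ q.darts := fun hd' =>
  lt_asymm (dist_lt_dist_of_mem_darts hp hd) (dist_lt_dist_of_mem_darts hq hd')

lemma sum_map_edges_eq_sub [AddCommGroup R] {r : U → R} {f : Sym2 U → R} {u v : U}
    (p : G.Walk u v) (hf : ∀ d ∈ p.darts, f d.edge = r d.fst - r d.snd) :
    (p.edges.map f).sum = r u - r v := by
  induction p with
  | nil => simp
  | cons h q ih =>
    rw [SimpleGraph.Walk.darts_cons, List.forall_mem_cons] at hf
    rw [SimpleGraph.Walk.edges_cons, List.map_cons, List.sum_cons, ih hf.2]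
    exact (congrArg (· + _) hf.1).trans (sub_add_sub_cancel _ _ _)

/-- The drop of the potential `r` along an edge, measured in the direction in which the set of darts
`S` contains it, and `0` on the edges that `S` does not use. It is meaningful when `S` contains no
dart together with its reverse. -/
noncomputable def edgeDrop [AddGroup R] (S : Set G.Dart) (r : U → R) : Sym2 U → R :=
  Function.extend (fun d : S => d.1.edge) (fun d => r d.1.fst - r d.1.snd) 0

lemma edgeDrop_edge [AddGroup R] {S : Set G.Dart} (hS : ∀ d ∈ S, d.symm ∉ S) (r : U → R)
    {d : G.Dart} (hd : d ∈ S) : edgeDrop S r d.edge = r d.fst - r d.snd := by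
  have edge_injective : Function.Injective fun d : S => d.1.edge := fun d₁ d₂ h =>
    ((SimpleGraph.dart_edge_eq_iff _ _).1 h).elim Subtype.ext
      fun h => absurd (h ▸ d₁.2) (hS d₂ d₂.2)
  exact edge_injective.extend_apply _ _ (⟨d, hd⟩ : S)

lemma abs_edgeDrop_le [AddCommGroup R] [LinearOrder R] [IsOrderedAddMonoid R] {S : Set G.Dart}
    (hS : ∀ d ∈ S, d.symm ∉ S) (r : U → R) (x y : U) :
    |edgeDrop S r s(x, y)| ≤ |r x - r y| := by
  by_cases h : ∃ d : S, d.1.edge = s(x, y)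
  · obtain ⟨⟨d, hd⟩, hxy⟩ := h
    rw [← hxy, edgeDrop_edge hS r hd]
    rcases SimpleGraph.dart_edge_eq_mk'_iff'.1 hxy with ⟨rfl, rfl⟩ | ⟨rfl, rfl⟩
    · rfl
    · rw [abs_sub_comm]
  · rw [edgeDrop, Function.extend_apply' _ _ _ h]
    simp

lemma sum_mul_eq_sum_edge_mul [Fintype U] [DecidableEq U] [DecidableRel G.Adj] [CommRing R]
    {r m : U → R} (hm : ∑ v, m v = 0) {f : Sym2 U → R} {p : ∀ v, G.Walk v t}
    (hp : ∀ v, (p v).IsTrail) (hf : ∀ v, ∀ d ∈ (p v).darts, f d.edge = r d.fst - r d.snd) :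
    ∑ v, r v * m v = ∑ e ∈ G.edgeFinset, f e * ∑ v with e ∈ (p v).edges, m v := by
  have telescope (v : U) : r v - r t = ∑ e ∈ (p v).edges.toFinset, f e := by
    rw [List.sum_toFinset _ (hp v).edges_nodup, sum_map_edges_eq_sub (p v) (hf v)]
  calc ∑ v, r v * m v
      = ∑ v, (r v - r t) * m v := by simp [sub_mul, ← mul_sum, hm]
    _ = ∑ v, ∑ e ∈ (p v).edges.toFinset, f e * m v := by simp only [telescope, sum_mul]
    _ = ∑ e ∈ G.edgeFinset, ∑ v with e ∈ (p v).edges, f e * m v := sum_comm' fun v e => by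
        simpa using fun h => (p v).edges_subset_edgeSet h
    _ = ∑ e ∈ G.edgeFinset, f e * ∑ v with e ∈ (p v).edges, m v := by simp only [mul_sum]

end Walks

section Degrees

variable {U R : Type*} [Fintype U] (G : SimpleGraph U) [DecidableRel G.Adj]

/-- `λ v` minus half the degree of `v`. Its sum over `B` is `Δ_w(O_B) - δ_B / 2`, the quantity that
the conditions `(⋆⋆)_B` bound by `1 / 2` in absolute value. -/
def centeredWeight (lam : U → ℚ) (v : U) : ℚ := lam v - G.degree v / 2

lemma sum_eq_card_edgeFinset_of_polarization {g : U → ℕ} {w : U → ℚ} (hw : ∑ v, w v = 1) {pa : ℚ}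
    (hpa : pa = (∑ v, (g v : ℚ)) + #G.edgeFinset - Fintype.card U + 1) {lam : U → ℚ}
    (hlam : ∀ v, lam v = 1 - g v - w v * (1 - pa)) : ∑ v, lam v = #G.edgeFinset := by
  simp [hlam, sum_sub_distrib, ← sum_mul, hw, hpa]

lemma sum_univ_centeredWeight {lam : U → ℚ} (hlam : ∑ v, lam v = #G.edgeFinset) :
    ∑ v, centeredWeight G lam v = 0 := by
  have h := congrArg (Nat.cast : ℕ → ℚ) G.sum_degrees_eq_twice_card_edges
  push_cast at h
  simp only [centeredWeight, sum_sub_distrib, ← sum_div, h, hlam]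
  ring

variable [DecidableEq U]

lemma sum_degree_nsmul_eq_sum_edges [AddCommMonoid R] (f : U → R) :
    ∑ v, G.degree v • f v = ∑ e ∈ G.edgeFinset, ∑ v with v ∈ e, f v := by
  simp only [← G.card_incidenceFinset_eq_degree, ← sum_const]
  exact sum_comm' fun v e => by simp [SimpleGraph.incidenceSet, and_comm]

lemma sum_filter_mem_mk [AddCommMonoid R] (f : U → R) {x y : U} (h : x ≠ y) :
    ∑ v with v ∈ s(x, y), f v = f x + f y := by
  have : ({v | v ∈ s(x, y)} : Finset U) = {x, y} := by ext; simp
  rw [this, sum_pair h]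

lemma sum_degree_eq_two_mul_insideCount_add_crossCount (B : Finset U) :
    ∑ v ∈ B, G.degree v = 2 * insideCount G B + crossCount G B := by
  have double_count : ∑ v ∈ B, G.degree v =
      ∑ e ∈ G.edgeFinset, ∑ v with v ∈ e, if v ∈ B then 1 else 0 := by
    rw [← sum_degree_nsmul_eq_sum_edges]
    simp
  rw [double_count, insideCount, crossCount, card_filter, card_filter, mul_sum, ← sum_add_distrib]
  refine sum_congr rfl fun e he => ?_
  induction e with | _ x y
  have hxy : x ≠ y := (SimpleGraph.mem_edgeFinset.1 he).ne
  rw [sum_filter_mem_mk _ hxy]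
  by_cases hx : x ∈ B <;> by_cases hy : y ∈ B <;> simp [hx, hy]

lemma sum_centeredWeight (lam : U → ℚ) (B : Finset U) :
    ∑ v ∈ B, centeredWeight G lam v = DeltaO G lam B - crossCount G B / 2 := by
  have h := congrArg (Nat.cast : ℕ → ℚ) (sum_degree_eq_two_mul_insideCount_add_crossCount G B)
  push_cast at h
  simp only [centeredWeight, DeltaO, sum_sub_distrib, ← sum_div, h]
  ring

lemma abs_sum_centeredWeight_lt_half {lam : U → ℚ} {B : Finset U}
    (hB : B.Nonempty → ((crossCount G B : ℚ) - 1) / 2 < DeltaO G lam B ∧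
      DeltaO G lam B < ((crossCount G B : ℚ) + 1) / 2) :
    |∑ v ∈ B, centeredWeight G lam v| < 1 / 2 := by
  rcases B.eq_empty_or_nonempty with rfl | hne
  · simp
  · obtain ⟨hlower, hupper⟩ := hB hne
    rw [sum_centeredWeight, abs_lt]
    constructor <;> linarith

end Degrees

namespace DepthOneDatum

section Edges

variable {U : Type*} {G : SimpleGraph U} (D : DepthOneDatum G)

lemma tRes_mk (x y : U) : D.tRes s(x, y) = D.a x s(x, y) + D.a y s(x, y) := rfl

lemma tRes_eq_zero_iff {e : Sym2 U} : D.tRes e = 0 ↔ ∀ v ∈ e, D.a v e = 0 := by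
  induction e with | _ x y
  rw [tRes_mk, Sym2.ball]
  norm_cast
  exact Nat.add_eq_zero_iff

lemma locFree_iff_tRes_eq_zero : D.LocFree ↔ ∀ e ∈ G.edgeSet, D.tRes e = 0 := by
  simp only [LocFree, tRes_eq_zero_iff]

variable {x y : U}

lemma rank_left (h : G.Adj x y) : (D.r x : ℚ) = D.s s(x, y) + D.a x s(x, y) :=
  mod_cast D.compat s(x, y) h x (Sym2.mem_mk_left x y)

lemma rank_right (h : G.Adj x y) : (D.r y : ℚ) = D.s s(x, y) + D.a y s(x, y) :=
  mod_cast D.compat s(x, y) h y (Sym2.mem_mk_right x y)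

lemma rank_add_rank (h : G.Adj x y) :
    (D.r x : ℚ) + D.r y = 2 * D.s s(x, y) + D.tRes s(x, y) := by
  rw [D.rank_left h, D.rank_right h, tRes_mk]
  ring

lemma abs_rank_sub_rank_le_tRes (h : G.Adj x y) : |(D.r x : ℚ) - D.r y| ≤ D.tRes s(x, y) := by
  rw [D.rank_left h, D.rank_right h, add_sub_add_left_eq_sub, tRes_mk]
  exact (abs_sub _ _).trans_eq (by simp only [Nat.abs_cast])

end Edges

variable {U : Type*} [Fintype U] {G : SimpleGraph U} [DecidableRel G.Adj] (D : DepthOneDatum G)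

lemma sum_degree_mul_rank :
    ∑ v, (G.degree v : ℚ) * D.r v = ∑ e ∈ G.edgeFinset, (2 * (D.s e : ℚ) + D.tRes e) := by
  classical
  simp only [← nsmul_eq_mul]
  rw [sum_degree_nsmul_eq_sum_edges]
  refine sum_congr rfl fun e he => ?_
  induction e with | _ x y
  have hxy : G.Adj x y := SimpleGraph.mem_edgeFinset.1 he
  rw [sum_filter_mem_mk _ hxy.ne, D.rank_add_rank hxy]

lemma defect_eq_sum_centeredWeight_add (lam : U → ℚ) :
    D.defect lam =
      ∑ v, (D.r v : ℚ) * centeredWeight G lam v + ∑ e ∈ G.edgeFinset, 1 / 2 * D.tRes e := by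
  have hdeg := D.sum_degree_mul_rank
  rw [sum_add_distrib, ← mul_sum] at hdeg
  have hweight : ∑ v, (D.r v : ℚ) * centeredWeight G lam v =
      ∑ v, (D.r v : ℚ) * lam v - (∑ v, (G.degree v : ℚ) * D.r v) / 2 := by
    rw [sum_div, ← sum_sub_distrib]
    exact sum_congr rfl fun v _ => by rw [centeredWeight]; ring
  rw [hweight, hdeg, ← mul_sum, defect]
  ring

end DepthOneDatum

section Positivity

variable {K : Type*} [CommRing K] [LinearOrder K] [IsStrictOrderedRing K] {c f m T : K}

lemma sub_abs_mul_le_mul_add_mul (hf : |f| ≤ T) : (c - |m|) * T ≤ f * m + c * T := by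
  have h : -(T * |m|) ≤ f * m :=
    (neg_le_neg ((abs_mul f m).trans_le (by gcongr))).trans (neg_abs_le _)
  linear_combination h

lemma mul_add_mul_nonneg_of_abs_le (hf : |f| ≤ T) (hm : |m| ≤ c) : 0 ≤ f * m + c * T :=
  (mul_nonneg (sub_nonneg.2 hm) ((abs_nonneg f).trans hf)).trans (sub_abs_mul_le_mul_add_mul hf)

lemma mul_add_mul_eq_zero_iff_of_abs_lt (hf : |f| ≤ T) (hm : |m| < c) :
    f * m + c * T = 0 ↔ T = 0 := by
  constructor
  · intro h
    have hT : T ≤ 0 := nonpos_of_mul_nonpos_right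
      ((sub_abs_mul_le_mul_add_mul hf).trans_eq h) (sub_pos.2 hm)
    exact hT.antisymm ((abs_nonneg f).trans hf)
  · rintro rfl
    simp [abs_nonpos_iff.1 hf]

end Positivity

theorem stmt_11_general (G : SimpleGraph V) [DecidableRel G.Adj]
    (lam : V → ℚ) (hlam : ∑ v, lam v = #G.edgeFinset)
    (t : V) (p : ∀ v : V, G.Walk v t) (htrail : ∀ v, (p v).IsTrail)
    (hcoherent : ∀ u v, ∀ d ∈ (p u).darts, d.symm ∉ (p v).darts)
    (A : Sym2 V → Finset V) (hA : ∀ e v, v ∈ A e ↔ e ∈ (p v).edges)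
    (hstar : ∀ e ∈ G.edgeFinset, (A e).Nonempty →
      ((crossCount G (A e) : ℚ) - 1) / 2 < DeltaO G lam (A e)
      ∧ DeltaO G lam (A e) < ((crossCount G (A e) : ℚ) + 1) / 2) :
    ∀ D : DepthOneDatum G,
      0 ≤ D.defect lam ∧ (D.defect lam = 0 ↔ D.LocFree) := by
  intro D
  let S : Set G.Dart := {d | ∃ v, d ∈ (p v).darts}
  have hS : ∀ d ∈ S, d.symm ∉ S := fun d ⟨u, hd⟩ ⟨v, hd'⟩ => hcoherent u v d hd hd'
  let f : Sym2 V → ℚ := edgeDrop S fun v => D.r v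
  let m : Sym2 V → ℚ := fun e => ∑ v ∈ A e, centeredWeight G lam v
  have hf : ∀ e ∈ G.edgeFinset, |f e| ≤ D.tRes e := fun e he => by
    induction e with | _ x y
    exact (abs_edgeDrop_le hS _ x y).trans
      (D.abs_rank_sub_rank_le_tRes (SimpleGraph.mem_edgeFinset.1 he))
  have hm : ∀ e ∈ G.edgeFinset, |m e| < 1 / 2 := fun e he =>
    abs_sum_centeredWeight_lt_half G (hstar e he)
  have hA' (e : Sym2 V) : ({v | e ∈ (p v).edges} : Finset V) = A e := by ext; simp [hA]
  have hdefect : D.defect lam = ∑ e ∈ G.edgeFinset, (f e * m e + 1 / 2 * D.tRes e) := by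
    rw [D.defect_eq_sum_centeredWeight_add, sum_mul_eq_sum_edge_mul
      (sum_univ_centeredWeight G hlam) htrail fun v d hd => edgeDrop_edge hS _ ⟨v, hd⟩]
    simp only [hA', sum_add_distrib, f, m]
  have hnonneg : ∀ e ∈ G.edgeFinset, 0 ≤ f e * m e + 1 / 2 * D.tRes e := fun e he =>
    mul_add_mul_nonneg_of_abs_le (hf e he) (hm e he).le
  have hzero : ∀ e ∈ G.edgeFinset, f e * m e + 1 / 2 * D.tRes e = 0 ↔ D.tRes e = 0 :=
    fun e he => mul_add_mul_eq_zero_iff_of_abs_lt (hf e he) (hm e he)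
  rw [hdefect, sum_eq_zero_iff_of_nonneg hnonneg, D.locFree_iff_tRes_eq_zero, forall₂_congr hzero]
  exact ⟨sum_nonneg hnonneg, by simp only [SimpleGraph.mem_edgeFinset]⟩

/-- if the conditions `(⋆⋆)_{A_e}`, i.e.
`(δ_{A_e} − 1)/2 < Δ_w(O_{A_e}) < (δ_{A_e} + 1)/2`, hold for every edge `e` with
`A_e ≠ ∅`, then `w` is numerically good: every depth-one datum has nonnegative defect,
with defect zero iff the datum is locally free. -/
theorem stmt_11 (G : SimpleGraph V) [DecidableRel G.Adj]
    (hG : G.Connected) (hγ : 2 ≤ Fintype.card V)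
    (g : V → ℕ) (w : V → ℚ) (hw : ∀ v, 0 < w v ∧ w v < 1) (hwsum : ∑ v, w v = 1)
    (pa : ℚ)
    (hpa : pa = (∑ v, (g v : ℚ)) + (G.edgeFinset.card : ℚ) - (Fintype.card V : ℚ) + 1)
    (lam : V → ℚ) (hlam : ∀ v, lam v = 1 - (g v : ℚ) - w v * (1 - pa))
    (t : V) (p : ∀ v : V, G.Walk v t)
    (hmin : ∀ v, (p v).length = G.dist v t)
    (hres : ∀ (v u : V) (h : u ∈ (p v).support), (p v).dropUntil u h = p u)
    (A : Sym2 V → Finset V) (hA : ∀ e v, v ∈ A e ↔ e ∈ (p v).edges)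
    (hstar : ∀ e ∈ G.edgeFinset, (A e).Nonempty →
      ((crossCount G (A e) : ℚ) - 1) / 2 < DeltaO G lam (A e)
      ∧ DeltaO G lam (A e) < ((crossCount G (A e) : ℚ) + 1) / 2) :
    ∀ D : DepthOneDatum G,
      0 ≤ D.defect lam ∧ (D.defect lam = 0 ↔ D.LocFree) :=
  stmt_11_general G lam (sum_eq_card_edgeFinset_of_polarization G hwsum hpa hlam) t p
    (fun v => ((p v).isPath_of_length_eq_dist (hmin v)).isTrail)
    (fun u v _ => symm_notMem_darts_of_length_eq_dist (hmin u) (hmin v)) A hA hstar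
end

section
/- Let G be a finite connected simple graph with vertex set V of size γ ≥ 2 and δ edges, g : V → ℕ, and w : V → ℚ with 0 < w(v) < 1 and ∑ w(v) = 1; set p_a = (∑ g(v)) + δ − γ + 1, λ(v) = 1 − g(v) − w(v)·(1 − p_a), and Δ_w(O_B) = (∑_{v∈B} λ(v)) − N(B) for B ⊆ V. Suppose w is numerically good: every depth-one datum (r,s,a,b) on G has defect Δ = (∑_{v∈V} r(v)·λ(v)) − ∑_e s(e) ≥ 0, with Δ = 0 if and only if a ≡ b ≡ 0. Then for every nonempty proper subset B ⊆ V, 0 < Δ_w(O_B) < δ_B. In particular, if p_a ≥ 2 then for every vertex v: (g(v) − 1)/(p_a − 1) < w(v) < (g(v) − 1 + deg(v))/(p_a − 1). -/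
open Finset

variable {V : Type*} [Fintype V] [DecidableEq V]

/-!
The structure sheaf `O_B` of the subcurve with components `B` is a depth one sheaf of defect
`Δ_w(O_B)`, with torsion parts exactly at the nodes joining `B` to its complement. When the dual
graph is connected and `B` is nonempty and proper there is such a node, so goodness gives
`0 < Δ_w(O_B)`. An edge lies inside `B`, inside `Bᶜ`, or crosses, and `∑ v, λ v` is the number of
edges, so `Δ_w(O_B) + Δ_w(O_{Bᶜ}) = δ_B`: the upper bound for `B` is the lower bound for `Bᶜ`.
The bounds on `w v` are the case `B = {v}`.
-/

section EdgeCounts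

variable (G : SimpleGraph V) [DecidableRel G.Adj]

theorem insideCount_add_insideCount_compl_add_crossCount (B : Finset V) :
    insideCount G B + insideCount G Bᶜ + crossCount G B = #G.edgeFinset := by
  rw [card_eq_sum_ones G.edgeFinset]
  simp only [insideCount, crossCount, card_filter, ← sum_add_distrib]
  refine sum_congr rfl fun e _ => ?_
  have not_both : ¬(e ∈ B.sym2 ∧ e ∈ Bᶜ.sym2) := by
    induction e with
    | _ x y =>
      simp only [mk_mem_sym2_iff, mem_compl]
      tauto
  split_ifs <;> tauto

theorem crossCount_eq_zero_iff (B : Finset V) :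
    crossCount G B = 0 ↔ ∀ u v, G.Adj u v → u ∈ B → v ∈ B := by
  simp only [crossCount, card_eq_zero, filter_eq_empty_iff, SimpleGraph.mem_edgeFinset, Sym2.forall,
    SimpleGraph.mem_edgeSet, mk_mem_sym2_iff, mem_compl]
  refine ⟨fun h u v huv => ?_, fun h u v huv => ?_⟩
  · have := h u v huv
    tauto
  · have := h u v huv
    have := h v u huv.symm
    tauto

theorem insideCount_singleton (v : V) : insideCount G {v} = 0 := by
  simp only [insideCount, card_eq_zero, filter_eq_empty_iff, SimpleGraph.mem_edgeFinset,
    Sym2.forall, SimpleGraph.mem_edgeSet, mk_mem_sym2_iff, mem_singleton]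
  rintro x y hxy ⟨rfl, rfl⟩
  exact hxy.ne rfl

theorem crossCount_singleton (v : V) : crossCount G {v} = G.degree v := by
  rw [← G.card_incidenceFinset_eq_degree, G.incidenceFinset_eq_filter, crossCount]
  congr 1
  refine filter_congr fun e he => ?_
  induction e with
  | _ x y =>
    have hxy : x ≠ y := (SimpleGraph.mem_edgeFinset.1 he).ne
    simp only [mk_mem_sym2_iff, mem_singleton, mem_compl, Sym2.mem_iff]
    grind

end EdgeCounts

section DeltaO

variable (G : SimpleGraph V) [DecidableRel G.Adj] (lam : V → ℚ)

theorem DeltaO_add_DeltaO_compl (B : Finset V) :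
    DeltaO G lam B + DeltaO G lam Bᶜ = (∑ v, lam v) - #G.edgeFinset + crossCount G B := by
  rw [← insideCount_add_insideCount_compl_add_crossCount G B, ← sum_add_sum_compl B lam,
    DeltaO, DeltaO]
  push_cast
  ring

theorem DeltaO_singleton (v : V) : DeltaO G lam {v} = lam v := by
  simp [DeltaO, insideCount_singleton]

end DeltaO

namespace DepthOneDatum

section StructureSheaf

variable (G : SimpleGraph V) (B : Finset V)

/-- The depth-one datum of the structure sheaf `O_B` of the subcurve whose components are the
vertices in `B`. At a node where `B` meets its complement, the stalk of `O_B` has free rank `0`, so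
the rank of the component in `B` is all torsion part. -/
def structureSheaf : DepthOneDatum G where
  r v := if v ∈ B then 1 else 0
  s e := if e ∈ B.sym2 then 1 else 0
  a v e := if v ∈ B ∧ e ∉ B.sym2 then 1 else 0
  compat e _ v hv := by
    have mem_of_inside : e ∈ B.sym2 → v ∈ B := fun he => mem_sym2_iff.1 he v hv
    split_ifs <;> tauto

theorem defect_structureSheaf [DecidableRel G.Adj] (lam : V → ℚ) :
    (structureSheaf G B).defect lam = DeltaO G lam B := by
  simp [defect, structureSheaf, DeltaO, insideCount]

theorem locFree_structureSheaf_iff [DecidableRel G.Adj] :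
    (structureSheaf G B).LocFree ↔ crossCount G B = 0 := by
  rw [crossCount_eq_zero_iff]
  simp only [LocFree, structureSheaf, Sym2.forall, SimpleGraph.mem_edgeSet, Sym2.mem_iff,
    mk_mem_sym2_iff, ite_eq_right_iff, one_ne_zero, imp_false]
  refine ⟨fun h u v huv hu => ?_, fun h u v huv => ?_⟩
  · have := h u v huv u (.inl rfl)
    tauto
  · have := h u v huv
    have := h v u huv.symm
    rintro x (rfl | rfl) <;> tauto

end StructureSheaf

end DepthOneDatum

section Stability

variable {G : SimpleGraph V} [DecidableRel G.Adj] {B : Finset V} {lam : V → ℚ}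

theorem crossCount_pos (hG : G.Preconnected) (hB : B.Nonempty) (hB' : B ≠ univ) :
    0 < crossCount G B := by
  obtain ⟨u, hu⟩ := hB
  obtain ⟨v, hv⟩ : ∃ v, v ∉ B := by simpa [eq_univ_iff_forall] using hB'
  obtain ⟨p⟩ := hG u v
  obtain ⟨d, -, hfst, hsnd⟩ := p.exists_boundary_dart B hu hv
  exact Nat.pos_of_ne_zero fun h => hsnd ((crossCount_eq_zero_iff G B).1 h _ _ d.adj hfst)

theorem DeltaO_pos (hG : G.Preconnected)
    (hpos : ∀ D : DepthOneDatum G, ¬D.LocFree → 0 < D.defect lam)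
    (hB : B.Nonempty) (hB' : B ≠ univ) : 0 < DeltaO G lam B := by
  rw [← DepthOneDatum.defect_structureSheaf]
  exact hpos _ <| mt (DepthOneDatum.locFree_structureSheaf_iff G B).1 (crossCount_pos hG hB hB').ne'

theorem DeltaO_lt_crossCount (hG : G.Preconnected)
    (hpos : ∀ D : DepthOneDatum G, ¬D.LocFree → 0 < D.defect lam)
    (hsum : ∑ v, lam v = #G.edgeFinset) (hB : B.Nonempty) (hB' : B ≠ univ) :
    DeltaO G lam B < crossCount G B := by
  have compl_pos : 0 < DeltaO G lam Bᶜ :=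
    DeltaO_pos hG hpos (by simpa [nonempty_iff_ne_empty] using hB') (by simpa using hB.ne_empty)
  linarith [DeltaO_add_DeltaO_compl G lam B]

end Stability

theorem stmt_14_general [Nontrivial V] (G : SimpleGraph V) [DecidableRel G.Adj]
    (hG : G.Preconnected) (g : V → ℕ) (w : V → ℚ) (hwsum : ∑ v, w v = 1) (pa : ℚ)
    (hpa : pa = (∑ v, (g v : ℚ)) + #G.edgeFinset - Fintype.card V + 1)
    (lam : V → ℚ) (hlam : ∀ v, lam v = 1 - g v - w v * (1 - pa))
    (hpos : ∀ D : DepthOneDatum G, ¬D.LocFree → 0 < D.defect lam) :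
    (∀ B : Finset V, B.Nonempty → B ≠ univ →
        0 < DeltaO G lam B ∧ DeltaO G lam B < crossCount G B)
    ∧ (1 < pa → ∀ v : V,
        ((g v : ℚ) - 1) / (pa - 1) < w v
        ∧ w v < ((g v : ℚ) - 1 + G.degree v) / (pa - 1)) := by
  have hsum : ∑ v, lam v = #G.edgeFinset := by
    simp only [hlam, sum_sub_distrib, ← sum_mul, hwsum, hpa, sum_const, card_univ, nsmul_eq_mul]
    ring
  have stable (B : Finset V) (hB : B.Nonempty) (hB' : B ≠ univ) :
      0 < DeltaO G lam B ∧ DeltaO G lam B < crossCount G B :=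
    ⟨DeltaO_pos hG hpos hB hB', DeltaO_lt_crossCount hG hpos hsum hB hB'⟩
  refine ⟨stable, fun hp v => ?_⟩
  have hv := stable {v} (singleton_nonempty v) (singleton_ne_univ v)
  rw [DeltaO_singleton, crossCount_singleton, hlam] at hv
  rw [div_lt_iff₀ (sub_pos.2 hp), lt_div_iff₀ (sub_pos.2 hp)]
  constructor <;> linarith

/-- if `w` is numerically good then `0 < Δ_w(O_B) < δ_B` for every
nonempty proper subset `B`; in particular, if `p_a ≥ 2` then
`(g v − 1)/(p_a − 1) < w v < (g v − 1 + deg v)/(p_a − 1)` for every vertex. -/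
theorem stmt_14 (G : SimpleGraph V) [DecidableRel G.Adj]
    (hG : G.Connected) (hγ : 2 ≤ Fintype.card V)
    (g : V → ℕ) (w : V → ℚ) (hw : ∀ v, 0 < w v ∧ w v < 1) (hwsum : ∑ v, w v = 1)
    (pa : ℚ)
    (hpa : pa = (∑ v, (g v : ℚ)) + (G.edgeFinset.card : ℚ) - (Fintype.card V : ℚ) + 1)
    (lam : V → ℚ) (hlam : ∀ v, lam v = 1 - (g v : ℚ) - w v * (1 - pa))
    (hgood : ∀ D : DepthOneDatum G,
      0 ≤ D.defect lam ∧ (D.defect lam = 0 ↔ D.LocFree)) :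
    (∀ B : Finset V, B.Nonempty → B ≠ Finset.univ →
        0 < DeltaO G lam B ∧ DeltaO G lam B < (crossCount G B : ℚ))
    ∧ (2 ≤ pa → ∀ v : V,
        ((g v : ℚ) - 1) / (pa - 1) < w v
        ∧ w v < ((g v : ℚ) - 1 + (G.degree v : ℚ)) / (pa - 1)) := by
  have := Fintype.one_lt_card_iff_nontrivial.1 hγ
  exact (stmt_14_general G hG.preconnected g w hwsum pa hpa lam hlam fun D hD =>
    (hgood D).1.lt_of_ne' (mt (hgood D).2.1 hD)).imp_right fun bounds hp => bounds (by linarith)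
end
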